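/- Let Φ be a finite set of proposition symbols. Then ML(⊻) ≤ EMDL: for every formula φ ∈ ML(⊻)(Φ) there is a formula η ∈ EMDL(Φ) such that ‖φ‖ = ‖η‖, i.e., for every Kripke model K over Φ and every team T of K, K,T ⊨ φ if and only if K,T ⊨ η. -/

import Mathlib

namespace MDLTeam

/-- A Kripke model over a set `Φ` of proposition symbols: a set `W` of worlds,
an accessibility relation `R` and a valuation `V`.  A team of `K` is a subset of `K.W`. -/
structure Kripke (Φ : Type) : Type 1 where
  W : Type
  R : W → W → Prop
  V : Φ → Set W

namespace Kripke

variable {Φ : Type}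

/-- `R[T] = {v | ∃ w ∈ T, w R v}` -/
def img (K : Kripke Φ) (T : Set K.W) : Set K.W := {v | ∃ w ∈ T, K.R w v}

/-- `R⁻¹[S] = {w | ∃ v ∈ S, w R v}` -/
def pre (K : Kripke Φ) (S : Set K.W) : Set K.W := {w | ∃ v ∈ S, K.R w v}

/-- `T[R]S` iff `S ⊆ R[T]` and `T ⊆ R⁻¹[S]`. -/
def trs (K : Kripke Φ) (T S : Set K.W) : Prop := S ⊆ K.img T ∧ T ⊆ K.pre S

end Kripke

/-- Formulas of modal logic `ML(Φ)` in negation normal form. -/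
inductive MLFrm (Φ : Type) : Type
  | atom (p : Φ)
  | natom (p : Φ)
  | and (φ ψ : MLFrm Φ)
  | or (φ ψ : MLFrm Φ)
  | dia (φ : MLFrm Φ)
  | box (φ : MLFrm Φ)
  deriving DecidableEq

namespace MLFrm

variable {Φ : Type}

/-- Team semantics for `ML`. -/
def sat (K : Kripke Φ) : MLFrm Φ → Set K.W → Prop
  | atom p, T => T ⊆ K.V p
  | natom p, T => T ∩ K.V p = ∅
  | and φ ψ, T => sat K φ T ∧ sat K ψ T
  | or φ ψ, T => ∃ T₁ T₂, T = T₁ ∪ T₂ ∧ sat K φ T₁ ∧ sat K ψ T₂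
  | dia φ, T => ∃ S, K.trs T S ∧ sat K φ S
  | box φ, T => sat K φ (K.img T)

/-- Standard (pointwise) Kripke semantics for `ML`. -/
def psat (K : Kripke Φ) : MLFrm Φ → K.W → Prop
  | atom p, w => w ∈ K.V p
  | natom p, w => w ∉ K.V p
  | and φ ψ, w => psat K φ w ∧ psat K ψ w
  | or φ ψ, w => psat K φ w ∨ psat K ψ w
  | dia φ, w => ∃ v, K.R w v ∧ psat K φ v
  | box φ, w => ∀ v, K.R w v → psat K φ v

/-- Modal depth. -/
def md : MLFrm Φ → ℕ
  | atom _ => 0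
  | natom _ => 0
  | and φ ψ => max (md φ) (md ψ)
  | or φ ψ => max (md φ) (md ψ)
  | dia φ => md φ + 1
  | box φ => md φ + 1

end MLFrm

/-- Formulas of `ML(⊻)(Φ)`: modal logic with intuitionistic disjunction. -/
inductive MLI (Φ : Type) : Type
  | atom (p : Φ)
  | natom (p : Φ)
  | and (φ ψ : MLI Φ)
  | or (φ ψ : MLI Φ)
  | dia (φ : MLI Φ)
  | box (φ : MLI Φ)
  | idis (φ ψ : MLI Φ)
  deriving DecidableEq

namespace MLI

variable {Φ : Type}

/-- Team semantics for `ML(⊻)`. -/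
def sat (K : Kripke Φ) : MLI Φ → Set K.W → Prop
  | atom p, T => T ⊆ K.V p
  | natom p, T => T ∩ K.V p = ∅
  | and φ ψ, T => sat K φ T ∧ sat K ψ T
  | or φ ψ, T => ∃ T₁ T₂, T = T₁ ∪ T₂ ∧ sat K φ T₁ ∧ sat K ψ T₂
  | dia φ, T => ∃ S, K.trs T S ∧ sat K φ S
  | box φ, T => sat K φ (K.img T)
  | idis φ ψ, T => sat K φ T ∨ sat K ψ T

/-- Modal depth. -/
def md : MLI Φ → ℕ
  | atom _ => 0
  | natom _ => 0
  | and φ ψ => max (md φ) (md ψ)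
  | or φ ψ => max (md φ) (md ψ)
  | dia φ => md φ + 1
  | box φ => md φ + 1
  | idis φ ψ => max (md φ) (md ψ)

/-- The number of occurrences of the connective `⊻` in a formula. -/
def occIdis : MLI Φ → ℕ
  | atom _ => 0
  | natom _ => 0
  | and φ ψ => occIdis φ + occIdis ψ
  | or φ ψ => occIdis φ + occIdis ψ
  | dia φ => occIdis φ
  | box φ => occIdis φ
  | idis φ ψ => occIdis φ + occIdis ψ + 1

/-- The number of symbols in a formula. -/
def size : MLI Φ → ℕ
  | atom _ => 1
  | natom _ => 2
  | and φ ψ => size φ + size ψ + 1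
  | or φ ψ => size φ + size ψ + 1
  | dia φ => size φ + 1
  | box φ => size φ + 1
  | idis φ ψ => size φ + size ψ + 1

end MLI

/-- Formulas of extended modal dependence logic `EMDL(Φ)`: `ML` extended by
dependence atoms `dep(ψ₁,…,ψₙ,θ)` with `ψ₁,…,ψₙ,θ ∈ ML(Φ)`. -/
inductive EMDL (Φ : Type) : Type
  | atom (p : Φ)
  | natom (p : Φ)
  | and (φ ψ : EMDL Φ)
  | or (φ ψ : EMDL Φ)
  | dia (φ : EMDL Φ)
  | box (φ : EMDL Φ)
  | dep (l : List (MLFrm Φ)) (θ : MLFrm Φ)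

namespace EMDL

variable {Φ : Type}

/-- Team semantics for `EMDL`. -/
def sat (K : Kripke Φ) : EMDL Φ → Set K.W → Prop
  | atom p, T => T ⊆ K.V p
  | natom p, T => T ∩ K.V p = ∅
  | and φ ψ, T => sat K φ T ∧ sat K ψ T
  | or φ ψ, T => ∃ T₁ T₂, T = T₁ ∪ T₂ ∧ sat K φ T₁ ∧ sat K ψ T₂
  | dia φ, T => ∃ S, K.trs T S ∧ sat K φ S
  | box φ, T => sat K φ (K.img T)
  | dep l θ, T => ∀ w ∈ T, ∀ v ∈ T,
      (∀ ψ ∈ l, (MLFrm.sat K ψ {w} ↔ MLFrm.sat K ψ {v})) →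
      (MLFrm.sat K θ {w} ↔ MLFrm.sat K θ {v})

end EMDL

/-- `k`-bisimilarity of pointed models. -/
def bisim {Φ : Type} (K K' : Kripke Φ) : ℕ → K.W → K'.W → Prop
  | 0, w, w' => ∀ p, w ∈ K.V p ↔ w' ∈ K'.V p
  | k + 1, w, w' =>
      (∀ p, w ∈ K.V p ↔ w' ∈ K'.V p) ∧
      (∀ v, K.R w v → ∃ v', K'.R w' v' ∧ bisim K K' k v v') ∧
      (∀ v', K'.R w' v' → ∃ v, K.R w v ∧ bisim K K' k v v')

/-- Team `k`-bisimilarity: `K,T ⇌ₖ K',T'`. -/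
def tbisim {Φ : Type} (K K' : Kripke Φ) (k : ℕ) (T : Set K.W) (T' : Set K'.W) : Prop :=
  (∀ w ∈ T, ∃ w' ∈ T', bisim K K' k w w') ∧
  (∀ w' ∈ T', ∃ w ∈ T, bisim K K' k w w')

/-- `M(φ,K)`: the set of maximal teams satisfying `φ` in `K` (for `ML(⊻)`). -/
def MLI.Mset {Φ : Type} (K : Kripke Φ) (φ : MLI Φ) : Set (Set K.W) :=
  {T | MLI.sat K φ T ∧ ∀ S, MLI.sat K φ S → T ⊆ S → S = T}

/-- `N(φ,K)`: the family of minimal teams not satisfying `φ` in `K` (for `ML(⊻)`). -/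
def MLI.Nset {Φ : Type} (K : Kripke Φ) (φ : MLI Φ) : Set (Set K.W) :=
  {T | ¬ MLI.sat K φ T ∧ ∀ S, ¬ MLI.sat K φ S → S ⊆ T → S = T}

/-- The upper dimension `Dim(φ)` of an `ML(⊻)`-formula: the least `m` such that
`|M(φ,K)| ≤ m` for every Kripke model `K` over `Φ`. -/
noncomputable def MLI.Dim {Φ : Type} (φ : MLI Φ) : ℕ :=
  sInf {m : ℕ | ∀ K : Kripke Φ, (MLI.Mset K φ).Finite ∧ (MLI.Mset K φ).ncard ≤ m}

/-- The lower dimension `dim(φ)` of an `ML(⊻)`-formula: the least `n` such that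
`|T| ≤ n` for every Kripke model `K` over `Φ` and every `T ∈ N(φ,K)`. -/
noncomputable def MLI.ldim {Φ : Type} (φ : MLI Φ) : ℕ :=
  sInf {n : ℕ | ∀ K : Kripke Φ, ∀ T ∈ MLI.Nset K φ, T.Finite ∧ T.ncard ≤ n}

/-- `M(φ,K)`: the set of maximal teams satisfying `φ` in `K` (for `EMDL`). -/
def EMDL.Mset {Φ : Type} (K : Kripke Φ) (φ : EMDL Φ) : Set (Set K.W) :=
  {T | EMDL.sat K φ T ∧ ∀ S, EMDL.sat K φ S → T ⊆ S → S = T}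

/-- The upper dimension `Dim(φ)` of an `EMDL`-formula. -/
noncomputable def EMDL.Dim {Φ : Type} (φ : EMDL Φ) : ℕ :=
  sInf {m : ℕ | ∀ K : Kripke Φ, (EMDL.Mset K φ).Finite ∧ (EMDL.Mset K φ).ncard ≤ m}

/-- The `Ψ`-type of a state: `type_Ψ(K,w) = {ψ ∈ Ψ | K,w ⊨ ψ}`. -/
def typeSet {Φ : Type} (K : Kripke Φ) (Ψ : Set (MLFrm Φ)) (w : K.W) : Set (MLFrm Φ) :=
  {ψ | ψ ∈ Ψ ∧ MLFrm.psat K ψ w}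

/-- `tset_Ψ(K,T) = {type_Ψ(K,w) | w ∈ T}`. -/
def tset {Φ : Type} (K : Kripke Φ) (Ψ : Set (MLFrm Φ)) (T : Set K.W) : Set (Set (MLFrm Φ)) :=
  typeSet K Ψ '' T


theorem MLFrm.flat {Φ : Type} (K : Kripke Φ) (ψ : MLFrm Φ) (T : Set K.W) :
    MLFrm.sat K ψ T ↔ ∀ w ∈ T, MLFrm.psat K ψ w := by
  induction ψ generalizing T with
  | atom p => exact Iff.rfl
  | natom p =>
    simp only [MLFrm.sat, MLFrm.psat, Set.eq_empty_iff_forall_notMem, Set.mem_inter_iff, not_and]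
  | and a b iha ihb =>
    simp only [MLFrm.sat, MLFrm.psat, iha, ihb]
    grind
  | or a b iha ihb =>
    simp only [MLFrm.sat, MLFrm.psat, iha, ihb]
    constructor
    · rintro ⟨T₁, T₂, rfl, h1, h2⟩ w (hw | hw)
      · exact Or.inl (h1 w hw)
      · exact Or.inr (h2 w hw)
    · intro h
      refine ⟨{w ∈ T | MLFrm.psat K a w}, {w ∈ T | MLFrm.psat K b w}, ?_, fun w hw => hw.2,
        fun w hw => hw.2⟩
      ext w
      simp only [Set.mem_union, Set.mem_ofPred_eq]
      have := h w
      tauto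
  | dia a ih =>
    simp only [MLFrm.sat, MLFrm.psat, ih]
    constructor
    · rintro ⟨S, ⟨h1, h2⟩, h3⟩ w hw
      obtain ⟨v, hv, hr⟩ := h2 hw
      exact ⟨v, hr, h3 v hv⟩
    · intro h
      refine ⟨{v ∈ K.img T | MLFrm.psat K a v}, ⟨fun v hv => hv.1, fun w hw => ?_⟩,
        fun v hv => hv.2⟩
      obtain ⟨v, hr, hv⟩ := h w hw
      exact ⟨v, ⟨⟨w, hw, hr⟩, hv⟩, hr⟩
  | box a ih =>
    simp only [MLFrm.sat, MLFrm.psat, ih]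
    constructor
    · intro h w hw v hr
      exact h v ⟨w, hw, hr⟩
    · rintro h v ⟨w, hw, hr⟩
      exact h w hw v hr

/-- The inclusion of `ML` into `EMDL`. -/
def MLFrm.emb {Φ : Type} : MLFrm Φ → EMDL Φ
  | atom p => .atom p
  | natom p => .natom p
  | and a b => .and a.emb b.emb
  | or a b => .or a.emb b.emb
  | dia a => .dia a.emb
  | box a => .box a.emb

theorem MLFrm.emb_sat {Φ : Type} (K : Kripke Φ) (ψ : MLFrm Φ) (T : Set K.W) :
    EMDL.sat K ψ.emb T ↔ MLFrm.sat K ψ T := by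
  induction ψ generalizing T with
  | atom p => exact Iff.rfl
  | natom p => exact Iff.rfl
  | and a b iha ihb => simp only [MLFrm.emb, EMDL.sat, MLFrm.sat, iha, ihb]
  | or a b iha ihb => simp only [MLFrm.emb, EMDL.sat, MLFrm.sat, iha, ihb]
  | dia a ih => simp only [MLFrm.emb, EMDL.sat, MLFrm.sat, ih]
  | box a ih => simp only [MLFrm.emb, EMDL.sat, MLFrm.sat, ih]

/-- Negation normal form of the negation. -/
def MLFrm.neg {Φ : Type} : MLFrm Φ → MLFrm Φ
  | atom p => .natom p
  | natom p => .atom p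
  | and a b => .or a.neg b.neg
  | or a b => .and a.neg b.neg
  | dia a => .box a.neg
  | box a => .dia a.neg

theorem MLFrm.neg_psat {Φ : Type} (K : Kripke Φ) (ψ : MLFrm Φ) (w : K.W) :
    MLFrm.psat K ψ.neg w ↔ ¬ MLFrm.psat K ψ w := by
  induction ψ generalizing w with
  | atom p => exact Iff.rfl
  | natom p => simp [MLFrm.neg, MLFrm.psat]
  | and a b iha ihb => simp only [MLFrm.neg, MLFrm.psat, iha, ihb]; tauto
  | or a b iha ihb => simp only [MLFrm.neg, MLFrm.psat, iha, ihb]; tauto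
  | dia a ih => simp only [MLFrm.neg, MLFrm.psat, ih]; push Not; rfl
  | box a ih => simp only [MLFrm.neg, MLFrm.psat, ih]; push Not; rfl

/-- Normal form: an intuitionistic disjunction of `ML`-formulas. -/
theorem MLI.normal_form {Φ : Type} (φ : MLI Φ) :
    ∃ l : List (MLFrm Φ), l ≠ [] ∧ ∀ (K : Kripke Φ) (T : Set K.W),
      MLI.sat K φ T ↔ ∃ a ∈ l, MLFrm.sat K a T := by
  induction φ with
  | atom p => exact ⟨[.atom p], by simp, fun K T => by simp [MLI.sat, MLFrm.sat]⟩
  | natom p => exact ⟨[.natom p], by simp, fun K T => by simp [MLI.sat, MLFrm.sat]⟩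
  | and a b iha ihb =>
    obtain ⟨l, hl, h⟩ := iha
    obtain ⟨m, hm, h'⟩ := ihb
    refine ⟨(l ×ˢ m).map fun x => .and x.1 x.2, ?_, fun K T => ?_⟩
    · obtain ⟨x, hx⟩ := List.exists_mem_of_ne_nil l hl
      obtain ⟨y, hy⟩ := List.exists_mem_of_ne_nil m hm
      exact List.ne_nil_of_mem (List.mem_map.2 ⟨(x, y), List.mem_product.2 ⟨hx, hy⟩, rfl⟩)
    · simp only [MLI.sat, h, h', List.mem_map, Prod.exists, List.mem_product]
      constructor
      · rintro ⟨⟨x, hx, hxs⟩, y, hy, hys⟩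
        exact ⟨_, ⟨x, y, ⟨hx, hy⟩, rfl⟩, hxs, hys⟩
      · rintro ⟨_, ⟨x, y, ⟨hx, hy⟩, rfl⟩, hxs, hys⟩
        exact ⟨⟨x, hx, hxs⟩, y, hy, hys⟩
  | or a b iha ihb =>
    obtain ⟨l, hl, h⟩ := iha
    obtain ⟨m, hm, h'⟩ := ihb
    refine ⟨(l ×ˢ m).map fun x => .or x.1 x.2, ?_, fun K T => ?_⟩
    · obtain ⟨x, hx⟩ := List.exists_mem_of_ne_nil l hl
      obtain ⟨y, hy⟩ := List.exists_mem_of_ne_nil m hm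
      exact List.ne_nil_of_mem (List.mem_map.2 ⟨(x, y), List.mem_product.2 ⟨hx, hy⟩, rfl⟩)
    · simp only [MLI.sat, h, h', List.mem_map, Prod.exists, List.mem_product]
      constructor
      · rintro ⟨T₁, T₂, hT, ⟨x, hx, hxs⟩, y, hy, hys⟩
        exact ⟨_, ⟨x, y, ⟨hx, hy⟩, rfl⟩, T₁, T₂, hT, hxs, hys⟩
      · rintro ⟨_, ⟨x, y, ⟨hx, hy⟩, rfl⟩, T₁, T₂, hT, hxs, hys⟩
        exact ⟨T₁, T₂, hT, ⟨x, hx, hxs⟩, y, hy, hys⟩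
  | dia a ih =>
    obtain ⟨l, hl, h⟩ := ih
    refine ⟨l.map .dia, by simpa using hl, fun K T => ?_⟩
    simp only [MLI.sat, h, List.mem_map]
    constructor
    · rintro ⟨S, hS, x, hx, hxs⟩
      exact ⟨_, ⟨x, hx, rfl⟩, S, hS, hxs⟩
    · rintro ⟨_, ⟨x, hx, rfl⟩, S, hS, hxs⟩
      exact ⟨S, hS, x, hx, hxs⟩
  | box a ih =>
    obtain ⟨l, hl, h⟩ := ih
    refine ⟨l.map .box, by simpa using hl, fun K T => ?_⟩
    simp only [MLI.sat, h, List.mem_map]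
    constructor
    · rintro ⟨x, hx, hxs⟩
      exact ⟨_, ⟨x, hx, rfl⟩, hxs⟩
    · rintro ⟨_, ⟨x, hx, rfl⟩, hxs⟩
      exact ⟨x, hx, hxs⟩
  | idis a b iha ihb =>
    obtain ⟨l, hl, h⟩ := iha
    obtain ⟨m, hm, h'⟩ := ihb
    refine ⟨l ++ m, by simp [hl], fun K T => ?_⟩
    simp only [MLI.sat, h, h', List.mem_append]
    grind

/-- Team properties definable in `EMDL`. -/
def EDef {Φ : Type} (P : ∀ K : Kripke Φ, Set K.W → Prop) : Prop :=
  ∃ η : EMDL Φ, ∀ (K : Kripke Φ) (T : Set K.W), EMDL.sat K η T ↔ P K T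

/-- State properties definable in `ML`. -/
def MDef {Φ : Type} (q : ∀ K : Kripke Φ, K.W → Prop) : Prop :=
  ∃ ψ : MLFrm Φ, ∀ (K : Kripke Φ) (w : K.W), MLFrm.psat K ψ w ↔ q K w

theorem MDef.not {Φ : Type} {q : ∀ K : Kripke Φ, K.W → Prop} (h : MDef q) :
    MDef fun K w => ¬ q K w := by
  obtain ⟨ψ, h⟩ := h
  exact ⟨ψ.neg, fun K w => by rw [MLFrm.neg_psat, h]⟩

theorem MDef.and {Φ : Type} {q r : ∀ K : Kripke Φ, K.W → Prop} (h : MDef q) (h' : MDef r) :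
    MDef fun K w => q K w ∧ r K w := by
  obtain ⟨ψ, h⟩ := h
  obtain ⟨χ, h'⟩ := h'
  exact ⟨.and ψ χ, fun K w => by simp only [MLFrm.psat, h, h']⟩

theorem MDef.true {Φ : Type} (p : Φ) : MDef fun (K : Kripke Φ) (_ : K.W) => True :=
  ⟨.or (.atom p) (.natom p), fun K w => by simp only [MLFrm.psat]; tauto⟩

theorem MDef.forall {Φ ι : Type} (p : Φ) (s : Finset ι) (q : ι → ∀ K : Kripke Φ, K.W → Prop)
    (h : ∀ i, MDef (q i)) : MDef fun K w => ∀ i ∈ s, q i K w := by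
  classical
  induction s using Finset.induction_on with
  | empty => simpa using MDef.true p
  | insert a s _ ih => simpa using (h a).and ih

theorem MDef.eDef {Φ : Type} {q : ∀ K : Kripke Φ, K.W → Prop} (h : MDef q) :
    EDef fun K T => ∀ w ∈ T, q K w := by
  obtain ⟨ψ, h⟩ := h
  exact ⟨ψ.emb, fun K T => by simp only [MLFrm.emb_sat, MLFrm.flat, h]⟩

theorem EDef.and {Φ : Type} {q r : ∀ K : Kripke Φ, Set K.W → Prop} (h : EDef q) (h' : EDef r) :
    EDef fun K w => q K w ∧ r K w := by
  obtain ⟨ψ, h⟩ := h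
  obtain ⟨χ, h'⟩ := h'
  exact ⟨.and ψ χ, fun K w => by simp only [EMDL.sat, h, h']⟩

theorem EDef.or {Φ : Type} {q r : ∀ K : Kripke Φ, Set K.W → Prop} (h : EDef q) (h' : EDef r) :
    EDef fun K T => ∃ T₁ T₂, T = T₁ ∪ T₂ ∧ q K T₁ ∧ r K T₂ := by
  obtain ⟨ψ, h⟩ := h
  obtain ⟨χ, h'⟩ := h'
  exact ⟨.or ψ χ, fun K w => by simp only [EMDL.sat, h, h']⟩

theorem EDef.forall {Φ ι : Type} (p : Φ) (s : Finset ι)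
    (q : ι → ∀ K : Kripke Φ, Set K.W → Prop)
    (h : ∀ i ∈ s, EDef (q i)) : EDef fun K w => ∀ i ∈ s, q i K w := by
  classical
  induction s using Finset.induction_on with
  | empty => simpa using (MDef.true p).eDef
  | insert a s _ ih =>
    simpa using (h a (by simp)).and (ih fun i hi => h i (Finset.mem_insert_of_mem hi))

/-- The type of a state with respect to a finite family of formulas. -/
def ftype {Φ : Type} {n : ℕ} (α : Fin n → MLFrm Φ) (K : Kripke Φ) (w : K.W) : Set (Fin n) :=
  {i | MLFrm.psat K (α i) w}

theorem mdef_type_ne {Φ : Type} (p : Φ) {n : ℕ} (α : Fin n → MLFrm Φ) (t : Set (Fin n)) :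
    MDef fun K w => ¬ ftype α K w = t := by
  classical
  apply MDef.not
  have := MDef.forall p Finset.univ (fun i K w => MLFrm.psat K (α i) w ↔ i ∈ t) (fun i => by
    by_cases hi : i ∈ t
    · exact ⟨α i, by simp [hi]⟩
    · exact ⟨(α i).neg, by simp [hi, MLFrm.neg_psat]⟩)
  simpa [ftype, Set.ext_iff] using this

theorem edef_const {Φ : Type} (p : Φ) {n : ℕ} (α : Fin n → MLFrm Φ) :
    EDef fun K T => ∀ w ∈ T, ∀ v ∈ T, ftype α K w = ftype α K v := by
  have := EDef.forall p Finset.univ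
    (fun i (K : Kripke Φ) T => ∀ w ∈ T, ∀ v ∈ T, (MLFrm.psat K (α i) w ↔ MLFrm.psat K (α i) v))
    (fun i _ => ⟨.dep [] (α i), fun K T => by simp [EMDL.sat, MLFrm.flat]⟩)
  obtain ⟨η, h⟩ := this
  refine ⟨η, fun K T => (h K T).trans ?_⟩
  simp only [ftype, Set.ext_iff, Finset.mem_univ, true_implies, Set.mem_ofPred_eq]
  grind

/-- The property: At most `k` types are realised, is definable. -/
theorem edef_card {Φ : Type} (p : Φ) {n : ℕ} (α : Fin n → MLFrm Φ) (k : ℕ) :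
    EDef fun K T => ∃ S : Finset (Set (Fin n)), S.card ≤ k ∧ ∀ w ∈ T, ftype α K w ∈ S := by
  classical
  induction k with
  | zero => simpa using (MDef.true p).not.eDef
  | succ k ih =>
    obtain ⟨η, h⟩ := (edef_const p α).or ih
    refine ⟨η, fun K T => (h K T).trans ?_⟩
    constructor
    · rintro ⟨T₁, T₂, rfl, hc, S, hS, hT⟩
      rcases T₁.eq_empty_or_nonempty with rfl | ⟨v, hv⟩
      · exact ⟨S, by omega, by simpa using hT⟩
      · refine ⟨insert (ftype α K v) S, (Finset.card_insert_le _ _).trans (by omega), ?_⟩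
        rintro w (hw | hw)
        · rw [hc w hw v hv]; simp
        · exact Finset.mem_insert_of_mem (hT w hw)
    · rintro ⟨S, hS, hT⟩
      rcases S.eq_empty_or_nonempty with rfl | ⟨t, ht⟩
      · exact ⟨∅, T, by simp, by simp, ∅, by simp, hT⟩
      · refine ⟨{w ∈ T | ftype α K w = t}, {w ∈ T | ¬ ftype α K w = t}, ?_, ?_, S.erase t, ?_, ?_⟩
        · ext w
          simp only [Set.mem_union, Set.mem_ofPred_eq]
          tauto
        · rintro w ⟨_, hw⟩ v ⟨_, hv⟩
          rw [hw, hv]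
        · rw [Finset.card_erase_of_mem ht]; omega
        · rintro w ⟨hw, hwt⟩
          exact Finset.mem_erase.2 ⟨hwt, hT w hw⟩

/-- The property: Not all types in `X` are realised, is definable for nonempty `X`. -/
theorem edef_missing {Φ : Type} (p : Φ) {n : ℕ} (α : Fin n → MLFrm Φ)
    (X : Finset (Set (Fin n))) (hX : X.Nonempty) :
    EDef fun K T => ∃ t ∈ X, ∀ w ∈ T, ftype α K w ≠ t := by
  classical
  obtain ⟨η, h⟩ := (MDef.forall p X _ (mdef_type_ne p α)).eDef.or (edef_card p α (X.card - 1))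
  refine ⟨η, fun K T => (h K T).trans ?_⟩
  constructor
  · rintro ⟨T₁, T₂, rfl, h1, S, hS, h2⟩
    by_contra! hcon
    have : X ⊆ S := by
      intro t ht
      obtain ⟨w, hw | hw, rfl⟩ := hcon t ht
      · exact absurd rfl (h1 w hw _ ht)
      · exact h2 w hw
    have := Finset.card_le_card this
    have := hX.card_pos
    omega
  · rintro ⟨t, ht, hT⟩
    refine ⟨{w ∈ T | ftype α K w ∉ X}, {w ∈ T | ftype α K w ∈ X}, ?_, ?_, X.erase t, ?_, ?_⟩
    · ext w
      simp only [Set.mem_union, Set.mem_ofPred_eq]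
      tauto
    · rintro w ⟨_, hw⟩ s hs rfl
      exact hw hs
    · rw [Finset.card_erase_of_mem ht]
    · rintro w ⟨hw, hwX⟩
      exact Finset.mem_erase.2 ⟨hT w hw, hwX⟩

theorem MLI.exists_prop {Φ : Type} (φ : MLI Φ) : Nonempty Φ := by
  induction φ with
  | atom p => exact ⟨p⟩
  | natom p => exact ⟨p⟩
  | and a b iha ihb => exact iha
  | or a b iha ihb => exact iha
  | dia a ih => exact ih
  | box a ih => exact ih
  | idis a b iha ihb => exact iha

/-- Over a finite `Φ`, `ML(⊻) ≤ EMDL`: every `ML(⊻)(Φ)`-formula has an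
equivalent `EMDL(Φ)`-formula. -/
theorem mli_le_emdl {Φ : Type} [Fintype Φ] (φ : MLI Φ) :
    ∃ η : EMDL Φ, ∀ (K : Kripke Φ) (T : Set K.W),
      MLI.sat K φ T ↔ EMDL.sat K η T := by
  classical
  obtain ⟨p⟩ := φ.exists_prop
  obtain ⟨l, hl, hφ⟩ := φ.normal_form
  let α : Fin l.length → MLFrm Φ := l.get
  let B : Finset (Finset (Set (Fin l.length))) :=
    Finset.univ.filter fun X => ∀ i, ∃ t ∈ X, i ∉ t
  have hB : ∀ X ∈ B, X.Nonempty := by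
    intro X hX
    obtain ⟨t, ht, _⟩ := (Finset.mem_filter.1 hX).2 ⟨0, List.length_pos_iff.2 hl⟩
    exact ⟨t, ht⟩
  obtain ⟨η, hη⟩ := EDef.forall p B _ fun X hX => edef_missing p α X (hB X hX)
  refine ⟨η, fun K T => ?_⟩
  rw [hφ, hη]
  simp only [MLFrm.flat]
  constructor
  · rintro ⟨a, ha, hT⟩ X hX
    obtain ⟨i, rfl⟩ := List.get_of_mem ha
    obtain ⟨t, ht, hit⟩ := (Finset.mem_filter.1 hX).2 i
    refine ⟨t, ht, ?_⟩
    rintro w hw rfl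
    exact hit (hT w hw)
  · intro h
    by_contra! hcon
    obtain ⟨t, ht, hT⟩ := h (Finset.univ.filter fun t => ∃ w ∈ T, ftype α K w = t) (by
      refine Finset.mem_filter.2 ⟨Finset.mem_univ _, fun i => ?_⟩
      obtain ⟨w, hw, hi⟩ := hcon (α i) (List.get_mem l i)
      exact ⟨ftype α K w, Finset.mem_filter.2 ⟨Finset.mem_univ _, w, hw, rfl⟩, hi⟩)
    obtain ⟨w, hw, hwt⟩ := (Finset.mem_filter.1 ht).2
    exact hT w hw hwt

end MDLTeam
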